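/- arXiv:1701.07967 — 5 statements merged into one kernel-verified Lean document; each statement's English description precedes it below -/
import Mathlib

section
/- Fix M > 0, reals c > m, K > 0, θ ∈ (0,1) and j ∈ ℕ. Let E_j be the set of càdlàg x : [0,M] → ℝ such that x(t) ≥ x(t−) for all t ∈ (0,M] and such that, for all but at most j points t ∈ [0,M], either x(t) = 0 or x(t+s) = x(t) − s·(c−m) for all s with |s| small enough (and t+s ∈ [0,M]). Let D_j be the set of x ∈ E_j for which there exists a discontinuity point t of x with x(t−) = θK or x(t) = θK or t ∈ {0, M}. Define the long-intense-period functional L^{θK}(x) = sup{ t − s : 0 ≤ s < t ≤ M, x(u) > θK for all u ∈ (s,t) }, with the convention sup ∅ = 0. Then L^{θK} : D_M → ℝ is continuous, with respect to the Skorohod J1 distance on D_M, at every point x ∈ E_j ∖ D_j; that is, for every x ∈ E_j ∖ D_j and every ε > 0 there exists ζ > 0 such that every càdlàg y : [0,M] → ℝ with d_{J1}(x,y) < ζ satisfies |L^{θK}(y) − L^{θK}(x)| < ε. -/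
open MeasureTheory Filter Set

noncomputable section

/-- Time changes on `[0,M]`: strictly increasing continuous bijections fixing the
endpoints. -/
def TimeChange (M : ℝ) : Set (ℝ → ℝ) :=
  {l | ContinuousOn l (Icc 0 M) ∧ StrictMonoOn l (Icc 0 M) ∧
       l 0 = 0 ∧ l M = M ∧ Set.BijOn l (Icc 0 M) (Icc 0 M)}

/-- The Skorohod J1 distance on `[0,M]`. -/
def dJ1 (M : ℝ) (f g : ℝ → ℝ) : ℝ :=
  sInf ((fun l => max (⨆ t : Icc (0:ℝ) M, |f t - g (l t)|)
                      (⨆ t : Icc (0:ℝ) M, |l t - (t : ℝ)|)) '' TimeChange M)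

/-- càdlàg on `[0,M]`. -/
def Cadlag (M : ℝ) (x : ℝ → ℝ) : Prop :=
  (∀ t ∈ Ico (0:ℝ) M, Tendsto x (nhdsWithin t (Ioi t)) (nhds (x t))) ∧
  (∀ t ∈ Ioc (0:ℝ) M, ∃ L : ℝ, Tendsto x (nhdsWithin t (Iio t)) (nhds L))

/-- The length `L^η(x)` of the longest period during which `x` stays continuously above the
level `η` on `[0,M]` (with `sup ∅ = 0`, the convention of `Real.sSup`). -/
def LIP (M η : ℝ) (x : ℝ → ℝ) : ℝ :=
  sSup {r : ℝ | ∃ s t : ℝ, 0 ≤ s ∧ s < t ∧ t ≤ M ∧ r = t - s ∧ ∀ u ∈ Ioo s t, η < x u}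

/-- `E_j`: càdlàg functions with only upward jumps which, outside of at most `j` points,
are either at `0` or locally decrease at rate `c - m`. -/
def Eset (M c m : ℝ) (j : ℕ) : Set (ℝ → ℝ) :=
  {x | (∃ T : Finset ℝ, T.card ≤ j ∧ ∀ t ∈ Icc (0:ℝ) M, t ∉ T →
          (x t = 0 ∨ ∃ δ > 0, ∀ s : ℝ, |s| < δ → t + s ∈ Icc (0:ℝ) M →
            x (t + s) = x t - s * (c - m))) ∧
       ∀ t ∈ Ioc (0:ℝ) M, Function.leftLim x t ≤ x t}

/-- `D_j`: members of `E_j` having a discontinuity point `t` with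
`x(t-) = θK`, or `x(t) = θK`, or `t ∈ {0, M}`. -/
def Dset (M c m θK : ℝ) (j : ℕ) : Set (ℝ → ℝ) :=
  {x | x ∈ Eset M c m j ∧ ∃ t ∈ Icc (0:ℝ) M, Function.leftLim x t ≠ x t ∧
        (Function.leftLim x t = θK ∨ x t = θK ∨ t = 0 ∨ t = M)}

lemma cadlag_bdd {M : ℝ} {x : ℝ → ℝ} (hx : Cadlag M x) :
    ∃ C : ℝ, ∀ u ∈ Icc (0:ℝ) M, |x u| ≤ C := by
  have key : ∃ C : ℝ, ∀ u ∈ Icc (0:ℝ) M ∩ Icc (0:ℝ) M, |x u| ≤ C := by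
    refine (isCompact_Icc (a := (0:ℝ)) (b := M)).induction_on
      (p := fun S => ∃ C : ℝ, ∀ u ∈ S ∩ Icc (0:ℝ) M, |x u| ≤ C) ⟨0, by simp⟩ ?_ ?_ ?_
    · rintro s t hst ⟨C, hC⟩
      exact ⟨C, fun u hu => hC u ⟨hst hu.1, hu.2⟩⟩
    · rintro s t ⟨C, hC⟩ ⟨D, hD⟩
      refine ⟨max C D, fun u hu => ?_⟩
      rcases hu.1 with h | h
      · exact (hC u ⟨h, hu.2⟩).trans (le_max_left _ _)
      · exact (hD u ⟨h, hu.2⟩).trans (le_max_right _ _)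
    · intro t ht
      have hR : ∃ C : ℝ, ∀ᶠ u in nhdsWithin t (Ioi t), u ∈ Icc (0:ℝ) M → |x u| ≤ C := by
        rcases ht.2.lt_or_eq with h | h
        · refine ⟨|x t| + 1, ?_⟩
          have := (hx.1 t ⟨ht.1, h⟩).abs.eventually (eventually_le_nhds (lt_add_one _))
          filter_upwards [this] with u hu _ using hu
        · refine ⟨0, ?_⟩
          filter_upwards [self_mem_nhdsWithin] with u hu hu2
          exact absurd hu2.2 (not_le.2 (h ▸ hu))
      have hL : ∃ C : ℝ, ∀ᶠ u in nhdsWithin t (Iio t), u ∈ Icc (0:ℝ) M → |x u| ≤ C := by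
        rcases ht.1.lt_or_eq with h | h
        · obtain ⟨L, hL⟩ := hx.2 t ⟨h, ht.2⟩
          refine ⟨|L| + 1, ?_⟩
          have := hL.abs.eventually (eventually_le_nhds (lt_add_one _))
          filter_upwards [this] with u hu _ using hu
        · refine ⟨0, ?_⟩
          filter_upwards [self_mem_nhdsWithin] with u hu hu2
          exact absurd hu2.1 (not_le.2 (h ▸ hu))
      obtain ⟨C, hC⟩ := hR
      obtain ⟨D, hD⟩ := hL
      rw [eventually_nhdsWithin_iff] at hC hD
      refine ⟨{u | u ∈ Icc (0:ℝ) M → |x u| ≤ max (max C D) |x t|}, ?_,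
        max (max C D) |x t|, fun u hu => hu.1 hu.2⟩
      apply mem_nhdsWithin_of_mem_nhds
      filter_upwards [hC, hD] with u h1 h2 h3
      rcases lt_trichotomy u t with h | h | h
      · exact (h2 h h3).trans ((le_max_right _ _).trans (le_max_left _ _))
      · rw [h]; exact le_max_right _ _
      · exact (h1 h h3).trans ((le_max_left _ _).trans (le_max_left _ _))
  obtain ⟨C, hC⟩ := key
  exact ⟨C, fun u hu => hC u ⟨hu, hu⟩⟩

lemma exists_timeChange {M ζ : ℝ} {x y : ℝ → ℝ} (hx : Cadlag M x)
    (hy : Cadlag M y) (h : dJ1 M x y < ζ) :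
    ∃ l ∈ TimeChange M, ∀ t ∈ Icc (0:ℝ) M, |x t - y (l t)| < ζ ∧ |l t - t| < ζ := by
  have hne : (TimeChange M).Nonempty :=
    ⟨id, continuousOn_id, strictMonoOn_id, rfl, rfl, Set.bijOn_id _⟩
  obtain ⟨_, ⟨l, hl, rfl⟩, hlt⟩ := exists_lt_of_csInf_lt (hne.image _) h
  refine ⟨l, hl, fun t ht => ?_⟩
  obtain ⟨C, hC⟩ := cadlag_bdd hx
  obtain ⟨D, hD⟩ := cadlag_bdd hy
  have hmap := hl.2.2.2.2.mapsTo
  have b1 : BddAbove (range fun t : Icc (0:ℝ) M => |x t - y (l t)|) := by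
    refine ⟨C + D, ?_⟩
    rintro _ ⟨u, rfl⟩
    exact (abs_sub _ _).trans (add_le_add (hC u u.2) (hD _ (hmap u.2)))
  have b2 : BddAbove (range fun t : Icc (0:ℝ) M => |l t - (t:ℝ)|) := by
    refine ⟨M, ?_⟩
    rintro _ ⟨u, rfl⟩
    have h1 := hmap u.2
    have h2 := u.2
    exact abs_le.2 ⟨by linarith [h1.1, h2.2], by linarith [h1.2, h2.1]⟩
  have hlt' := max_lt_iff.1 hlt
  exact ⟨(le_ciSup b1 ⟨t, ht⟩).trans_lt hlt'.1, (le_ciSup b2 ⟨t, ht⟩).trans_lt hlt'.2⟩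

lemma LIP_nonneg (M η : ℝ) (x : ℝ → ℝ) : 0 ≤ LIP M η x := by
  apply Real.sSup_nonneg
  rintro r ⟨s, t, _, h, _, rfl, _⟩
  linarith

lemma le_LIP {M η : ℝ} {x : ℝ → ℝ} {s t : ℝ} (hs : 0 ≤ s) (hst : s < t) (ht : t ≤ M)
    (h : ∀ u ∈ Ioo s t, η < x u) : t - s ≤ LIP M η x := by
  apply le_csSup
  · refine ⟨M, ?_⟩
    rintro r ⟨s, t, _, h, _, rfl, _⟩
    linarith
  · exact ⟨s, t, hs, hst, ht, rfl, h⟩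

lemma strict_of_ge {M c m η : ℝ} (hcm : m < c) (hη : 0 < η) {j : ℕ} {x : ℝ → ℝ}
    (hx : Cadlag M x) (hxE : x ∈ Eset M c m j) {a b : ℝ} (ha : 0 ≤ a) (hb : b ≤ M)
    (h : ∀ u ∈ Ioo a b, η ≤ x u) : ∀ u ∈ Ioo a b, η < x u := by
  intro u hu
  refine lt_of_le_of_ne (h u hu) fun hEq => ?_
  obtain ⟨⟨T, -, hT⟩, -⟩ := hxE
  have hrc := hx.1 u ⟨by linarith [hu.1], by linarith [hu.2]⟩
  have hTf : ∀ᶠ v in nhdsWithin u (Ioi u), v ∉ T := by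
    have : ((T : Set ℝ) \ {u})ᶜ ∈ nhds u :=
      ((T.finite_toSet.subset sdiff_subset).isClosed.isOpen_compl).mem_nhds (by simp)
    filter_upwards [mem_nhdsWithin_of_mem_nhds this, self_mem_nhdsWithin] with v hv hv2 hv3
    exact hv ⟨hv3, ne_of_gt hv2⟩
  have hlt : ∀ᶠ v in nhdsWithin u (Ioi u), v < b :=
    mem_nhdsWithin_of_mem_nhds (Iio_mem_nhds hu.2)
  obtain ⟨w, hw, hw2⟩ := (mem_nhdsGT_iff_exists_Ioo_subset).1 (hTf.and hlt)
  have hw0 : u < w := hw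
  have hder : ∀ v ∈ Ioo u w, HasDerivAt x (-(c - m)) v := by
    intro v hv
    obtain ⟨hvT, hvb⟩ := hw2 hv
    have hvb' : v < b := hvb
    have hu1 := hu.1
    have hv1 := hv.1
    have hvp := h v ⟨by linarith, hvb⟩
    rcases hT v ⟨by linarith, by linarith⟩ hvT with h0 | ⟨δ, hδ, hl⟩
    · linarith
    · have hd : HasDerivAt (fun z => x v - (z - v) * (c - m)) (-(c - m)) v := by
        have := (((hasDerivAt_id v).sub_const v).mul_const (c - m)).const_sub (x v)
        simpa using this
      refine hd.congr_of_eventuallyEq ?_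
      filter_upwards [Metric.ball_mem_nhds v hδ, Ioo_mem_nhds hv1 hvb'] with z hz hz2
      have := hl (z - v) (by simpa [Real.dist_eq] using hz)
        ⟨by linarith [hz2.1], by linarith [hz2.2]⟩
      simpa using this
  set w' := (u + w) / 2 with hw'
  have h1 : u < w' := by linarith
  have h2 : w' < w := by linarith
  have hcont : ContinuousOn x (Icc u w') := by
    intro v hv
    rcases hv.1.lt_or_eq with h3 | h3
    · exact (hder v ⟨h3, hv.2.trans_lt h2⟩).continuousAt.continuousWithinAt
    · subst h3
      have : ContinuousWithinAt x (Ici u) u := continuousWithinAt_Ioi_iff_Ici.1 hrc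
      exact this.mono Icc_subset_Ici_self
  have hanti : StrictAntiOn x (Icc u w') := by
    refine strictAntiOn_of_deriv_neg (convex_Icc _ _) hcont fun v hv => ?_
    rw [interior_Icc] at hv
    rw [(hder v ⟨hv.1, hv.2.trans h2⟩).deriv]
    linarith
  have := hanti ⟨le_rfl, h1.le⟩ ⟨h1.le, le_rfl⟩ h1
  have h5 : w' < b := (hw2 ⟨h1, h2⟩).2
  have := h w' ⟨hu.1.trans h1, h5⟩
  linarith

lemma upper {M c m η : ℝ} (hcm : m < c) (hη : 0 < η) {j : ℕ} {x : ℝ → ℝ}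
    (hx : Cadlag M x) (hxE : x ∈ Eset M c m j) {ε : ℝ} (hε : 0 < ε) :
    ∃ δ > 0, ∀ a b : ℝ, 0 ≤ a → a < b → b ≤ M → (∀ u ∈ Ioo a b, η - δ < x u) →
      b - a ≤ LIP M η x + ε := by
  by_contra! hcon
  have hpos : ∀ n : ℕ, (0:ℝ) < 1 / ((n:ℝ) + 1) := fun n => Nat.one_div_pos_of_nat
  choose a b ha hab hb hux hlen using fun n : ℕ => hcon (1 / ((n:ℝ) + 1)) (hpos n)
  have hmem : ∀ n, (a n, b n) ∈ Icc (0:ℝ) M ×ˢ Icc (0:ℝ) M := fun n =>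
    ⟨⟨ha n, (hab n).le.trans (hb n)⟩, ⟨(ha n).trans (hab n).le, hb n⟩⟩
  obtain ⟨⟨A, B⟩, hAB, φ, hφ, hlim⟩ :=
    (isCompact_Icc.prod isCompact_Icc).tendsto_subseq hmem
  have hA : Tendsto (fun n => a (φ n)) atTop (nhds A) :=
    (continuous_fst.tendsto _).comp hlim
  have hB : Tendsto (fun n => b (φ n)) atTop (nhds B) :=
    (continuous_snd.tendsto _).comp hlim
  have hle : LIP M η x + ε ≤ B - A :=
    ge_of_tendsto (hB.sub hA) (Eventually.of_forall fun n => (hlen (φ n)).le)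
  have h0 := LIP_nonneg M η x
  have hge : ∀ u ∈ Ioo A B, η ≤ x u := by
    intro u hu
    have hl : Tendsto (fun n => η - 1 / ((φ n : ℝ) + 1)) atTop (nhds (η - 0)) :=
      tendsto_const_nhds.sub
        ((tendsto_one_div_add_atTop_nhds_zero_nat (𝕜 := ℝ)).comp hφ.tendsto_atTop)
    rw [sub_zero] at hl
    refine le_of_tendsto hl ?_
    filter_upwards [hA.eventually (gt_mem_nhds hu.1), hB.eventually (lt_mem_nhds hu.2)]
      with n h1 h2
    exact (hux (φ n) u ⟨h1, h2⟩).le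
  have := le_LIP hAB.1.1 (by linarith) hAB.2.2
    (strict_of_ge hcm hη hx hxE hAB.1.1 hAB.2.2 hge)
  linarith

lemma lower {M c m η : ℝ} {j : ℕ} {x : ℝ → ℝ}
    (hx : Cadlag M x) (hxE : x ∈ Eset M c m j) (hxD : x ∉ Dset M c m η j)
    {a b a' b' : ℝ} (ha : 0 ≤ a) (hb : b ≤ M) (ha' : a < a') (hb' : b' < b)
    (h : ∀ u ∈ Ioo a b, η < x u) :
    ∃ δ > 0, ∀ u ∈ Icc a' b', η + δ ≤ x u := by
  refine (isCompact_Icc (a := a') (b := b')).induction_on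
    (p := fun S => ∃ δ > 0, ∀ u ∈ S, η + δ ≤ x u) ⟨1, one_pos, by simp⟩ ?_ ?_ ?_
  · rintro s t hst ⟨C, hC0, hC⟩
    exact ⟨C, hC0, fun u hu => hC u (hst hu)⟩
  · rintro s t ⟨C, hC0, hC⟩ ⟨D, hD0, hD⟩
    refine ⟨min C D, lt_min hC0 hD0, fun u hu => ?_⟩
    rcases hu with h | h
    · linarith [hC u h, min_le_left C D]
    · linarith [hD u h, min_le_right C D]
  · intro t ht
    have hta : a < t := by linarith [ht.1]
    have htb : t < b := by linarith [ht.2]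
    have hxt := h t ⟨hta, htb⟩
    have hR := hx.1 t ⟨by linarith, by linarith⟩
    obtain ⟨L, hL⟩ := hx.2 t ⟨by linarith, by linarith⟩
    have hLe : Function.leftLim x t = L := leftLim_eq_of_tendsto hL
    have hLge : η ≤ L := by
      refine ge_of_tendsto hL ?_
      filter_upwards [self_mem_nhdsWithin, mem_nhdsWithin_of_mem_nhds (Ioi_mem_nhds hta)]
        with u h1 h2
      exact (h u ⟨h2, lt_trans h1 htb⟩).le
    have hLgt : η < L := by
      refine lt_of_le_of_ne hLge fun hEq => hxD ⟨hxE, t, ⟨by linarith, by linarith⟩, ?_, ?_⟩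
      · rw [hLe]; intro h; linarith
      · left; rw [hLe, hEq]
    have hmn : η < min L (x t) := lt_min hLgt hxt
    set δ := (min L (x t) - η) / 2 with hδ
    have h1 : η + δ < L := by linarith [min_le_left L (x t)]
    have h2 : η + δ < x t := by linarith [min_le_right L (x t)]
    have e1 := hL.eventually (lt_mem_nhds h1)
    have e2 := hR.eventually (lt_mem_nhds h2)
    rw [eventually_nhdsWithin_iff] at e1 e2
    refine ⟨{u | η + δ ≤ x u}, ?_, δ, by linarith, fun u hu => hu⟩
    apply mem_nhdsWithin_of_mem_nhds
    filter_upwards [e1, e2] with u g1 g2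
    rcases lt_trichotomy u t with g | g | g
    · exact (g1 g).le
    · rw [g]; exact h2.le
    · exact (g2 g).le

/-- **Continuity of the long-intense-period functional** `L^{θK}` at every càdlàg
`x ∈ E_j ∖ D_j`, with respect to the Skorohod J1 distance on `[0,M]`. -/
theorem LIP_continuousAt (M c m K θ : ℝ) (hM : 0 < M) (hcm : m < c)
    (hK : 0 < K) (hθ : θ ∈ Ioo (0:ℝ) 1) (j : ℕ)
    (x : ℝ → ℝ) (hx : Cadlag M x)
    (hxE : x ∈ Eset M c m j) (hxD : x ∉ Dset M c m (θ * K) j) :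
    ∀ ε > 0, ∃ ζ > 0, ∀ y : ℝ → ℝ, Cadlag M y → dJ1 M x y < ζ →
      |LIP M (θ * K) y - LIP M (θ * K) x| < ε := by
  intro ε hε
  have hη : 0 < θ * K := mul_pos hθ.1 hK
  generalize θ * K = η at *
  obtain ⟨δ₁, hδ₁, hup⟩ := upper hcm hη hx hxE (ε := ε / 4) (by linarith)
  have hlow : ∃ ζ > 0, ∀ y : ℝ → ℝ, Cadlag M y → dJ1 M x y < ζ →
      LIP M η x - ε < LIP M η y := by
    by_cases hsmall : LIP M η x < ε
    · exact ⟨1, one_pos, fun y _ _ => by linarith [LIP_nonneg M η y]⟩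
    · have hex : ∃ r ∈ {r : ℝ | ∃ s t : ℝ, 0 ≤ s ∧ s < t ∧ t ≤ M ∧ r = t - s ∧
          ∀ u ∈ Ioo s t, η < x u}, LIP M η x - ε / 4 < r := by
        apply exists_lt_of_lt_csSup
        · by_contra hne
          rw [not_nonempty_iff_eq_empty] at hne
          apply hsmall
          rw [LIP, hne, Real.sSup_empty]
          exact hε
        · change LIP M η x - ε / 4 < LIP M η x
          linarith
      obtain ⟨_, ⟨a, b, ha, hab, hb, rfl, hu⟩, hlt⟩ := hex
      obtain ⟨δ, hδ, hd⟩ := lower hx hxE hxD (a' := a + ε / 8) (b' := b - ε / 8) ha hb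
        (by linarith) (by linarith) hu
      refine ⟨min δ (ε / 8), lt_min hδ (by linarith), fun y hy hxy => ?_⟩
      obtain ⟨l, hl, hl2⟩ := exists_timeChange hx hy hxy
      obtain ⟨-, hmono, -, -, hbij⟩ := hl
      have m1 : a + ε / 8 ∈ Icc 0 M := ⟨by linarith, by linarith⟩
      have m2 : b - ε / 8 ∈ Icc 0 M := ⟨by linarith, by linarith⟩
      have k1 := abs_lt.1 (hl2 _ m1).2
      have k2 := abs_lt.1 (hl2 _ m2).2
      have k3 := min_le_right δ (ε / 8)
      have k4 := min_le_left δ (ε / 8)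
      have hfin := le_LIP (M := M) (η := η) (x := y) (hbij.mapsTo m1).1
        (hmono m1 m2 (by linarith)) (hbij.mapsTo m2).2 (by
          intro u hu
          obtain ⟨v, hv, rfl⟩ := hbij.surjOn
            ⟨(hbij.mapsTo m1).1.trans hu.1.le, hu.2.le.trans (hbij.mapsTo m2).2⟩
          have g1 := (hmono.lt_iff_lt m1 hv).1 hu.1
          have g2 := (hmono.lt_iff_lt hv m2).1 hu.2
          have g3 := hd v ⟨g1.le, g2.le⟩
          have g4 := abs_lt.1 (hl2 v hv).1
          linarith [g4.2])
      linarith [k1.2, k2.1]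
  obtain ⟨ζ, hζ, hlow⟩ := hlow
  refine ⟨min ζ (min δ₁ (ε / 8)), lt_min hζ (lt_min hδ₁ (by linarith)), fun y hy hxy => ?_⟩
  have h1 := hlow y hy (hxy.trans_le (min_le_left _ _))
  have h2 : LIP M η y ≤ LIP M η x + ε / 2 := by
    obtain ⟨l, hl, hl2⟩ := exists_timeChange hx hy (hxy.trans_le (min_le_right _ _))
    obtain ⟨-, hmono, -, -, hbij⟩ := hl
    have k3 := min_le_right δ₁ (ε / 8)
    have k4 := min_le_left δ₁ (ε / 8)
    refine Real.sSup_le ?_ (by linarith [LIP_nonneg M η x])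
    rintro _ ⟨s, t, hs, hst, ht, rfl, hu⟩
    obtain ⟨a, ha, rfl⟩ := hbij.surjOn ⟨hs, hst.le.trans ht⟩
    obtain ⟨b, hb, rfl⟩ := hbij.surjOn ⟨hs.trans hst.le, ht⟩
    have hab := (hmono.lt_iff_lt ha hb).1 hst
    have := hup a b ha.1 hab hb.2 (by
      intro v hv
      have hvM : v ∈ Icc 0 M := ⟨ha.1.trans hv.1.le, hv.2.le.trans hb.2⟩
      have g3 := hu (l v) ⟨hmono ha hvM hv.1, hmono hvM hb hv.2⟩
      have g4 := abs_lt.1 (hl2 v hvM).1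
      linarith [g4.1])
    have k1 := abs_lt.1 (hl2 _ ha).2
    have k2 := abs_lt.1 (hl2 _ hb).2
    linarith [k1.1, k2.2]
  exact abs_lt.2 ⟨by linarith, by linarith⟩

end
end

section
/- Let S be a separable complete normed additive commutative group (so the metric d(x,y) = ‖x−y‖ is translation invariant), and let C ⊆ S be closed. Let (μ_n)_{n≥1} be finite Borel measures on S and let μ_0 be a Borel measure on S∖C that is finite on all Borel sets bounded away from C. Suppose μ_n → μ_0 in M_O, i.e., limsup_{n→∞} μ_n(F) ≤ μ_0(F) for every closed F ⊆ S bounded away from C and liminf_{n→∞} μ_n(G) ≥ μ_0(G) for every open G ⊆ S bounded away from C. Let (y_n)_{n≥1} ⊆ S with y_n → 0, and define the shifted measures by (μ_n ∘ s_{y_n})(A) = μ_n(A − y_n) for Borel A, where A − y = { a − y : a ∈ A }. Then μ_n ∘ s_{y_n} → μ_0 in M_O, i.e., limsup_{n→∞} μ_n(F − y_n) ≤ μ_0(F) for every closed F bounded away from C, and liminf_{n→∞} μ_n(G − y_n) ≥ μ_0(G) for every open G bounded away from C. -/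
open MeasureTheory Filter Set

noncomputable section

/-- `A` is bounded away from `C`. -/
def BoundedAwayFrom {S : Type*} [PseudoMetricSpace S] (A C : Set S) : Prop :=
  ∃ ε > 0, ∀ a ∈ A, ∀ c ∈ C, ε ≤ dist a c

/-- **Shifting by a vanishing sequence preserves M_O-convergence.**
If finite Borel measures `μ_n` converge to `μ_0` in `M_O` (relative to a closed set `C`) on a
separable complete normed additive commutative group, and `y_n → 0`, then the shifted
measures `A ↦ μ_n(A − y_n)` also converge to `μ_0` in `M_O`. -/
theorem MO_convergence_shift {S : Type*} [NormedAddCommGroup S] [CompleteSpace S]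
    [TopologicalSpace.SeparableSpace S] [MeasurableSpace S] [BorelSpace S]
    (C : Set S) (hC : IsClosed C)
    (μ : ℕ → Measure S) (hfin : ∀ n, IsFiniteMeasure (μ n))
    (μ0 : Measure S)
    (hμ0 : ∀ A : Set S, MeasurableSet A → BoundedAwayFrom A C → μ0 A ≠ ⊤)
    (hupper : ∀ F : Set S, IsClosed F → BoundedAwayFrom F C →
      limsup (fun n => μ n F) atTop ≤ μ0 F)
    (hlower : ∀ G : Set S, IsOpen G → BoundedAwayFrom G C →
      μ0 G ≤ liminf (fun n => μ n G) atTop)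
    (y : ℕ → S) (hy : Tendsto y atTop (nhds 0)) :
    (∀ F : Set S, IsClosed F → BoundedAwayFrom F C →
      limsup (fun n => μ n ((fun a => a - y n) '' F)) atTop ≤ μ0 F) ∧
    (∀ G : Set S, IsOpen G → BoundedAwayFrom G C →
      μ0 G ≤ liminf (fun n => μ n ((fun a => a - y n) '' G)) atTop) := by
  constructor
  · intro F hF hFC
    obtain ⟨ε, hε, hd⟩ := hFC
    have hbd : ∀ δ, δ < ε / 2 → BoundedAwayFrom (Metric.cthickening δ F) C := by
      intro δ hδ
      refine ⟨ε / 2, by positivity, fun x hx c hc => ?_⟩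
      have hx' := Metric.cthickening_subset_thickening' (half_pos hε) hδ F hx
      obtain ⟨a, ha, hxa⟩ := Metric.mem_thickening_iff.1 hx'
      have h1 := hd a ha c hc
      have h2 := dist_triangle_left a c x
      linarith
    have hfinite : μ0 (Metric.cthickening (ε / 4) F) ≠ ⊤ :=
      hμ0 _ Metric.isClosed_cthickening.measurableSet (hbd _ (by linarith))
    have ht := tendsto_measure_cthickening_of_isClosed (μ := μ0)
      ⟨ε / 4, by positivity, hfinite⟩ hF
    have ht' := ht.mono_left (nhdsWithin_le_nhds (s := Ioi 0))
    refine ge_of_tendsto ht' ?_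
    have h4 : Iio (ε / 2) ∈ nhdsWithin (0 : ℝ) (Ioi 0) :=
      mem_nhdsWithin_of_mem_nhds (Iio_mem_nhds (by positivity))
    filter_upwards [self_mem_nhdsWithin, h4] with δ hδ hδ2
    refine le_trans ?_ (hupper _ Metric.isClosed_cthickening (hbd δ hδ2))
    refine limsup_le_limsup ?_
    filter_upwards [hy (Metric.ball_mem_nhds 0 hδ)] with n hn
    refine measure_mono ?_
    rintro _ ⟨a, ha, rfl⟩
    refine Metric.mem_cthickening_of_dist_le _ a _ _ ha ?_
    have : ‖y n‖ < δ := by simpa using hn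
    simpa [dist_eq_norm] using this.le
  · intro G hG hGC
    obtain ⟨ε, hε, hd⟩ := hGC
    let u : ℕ → ℝ := fun k => 1 / ((k : ℝ) + 1)
    have hu0 : ∀ k, 0 < u k := fun k => Nat.one_div_pos_of_nat
    have hsub : ∀ k, (Metric.cthickening (u k) Gᶜ)ᶜ ⊆ G := fun k => by
      rw [compl_subset_comm]
      exact Metric.self_subset_cthickening _
    have hmono : Monotone (fun k => (Metric.cthickening (u k) Gᶜ)ᶜ) := by
      intro i j hij
      exact compl_subset_compl.2
        (Metric.cthickening_mono (Nat.one_div_le_one_div hij) _)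
    have hU : ⋃ k, (Metric.cthickening (u k) Gᶜ)ᶜ = G := by
      refine Subset.antisymm (iUnion_subset hsub) fun x hx => ?_
      obtain ⟨r, hr, hball⟩ := Metric.isOpen_iff.1 hG x hx
      obtain ⟨k, hk⟩ := exists_nat_one_div_lt hr
      refine mem_iUnion.2 ⟨k, fun hxk => ?_⟩
      have hx' := Metric.cthickening_subset_thickening' hr hk _ hxk
      obtain ⟨a, ha, hxa⟩ := Metric.mem_thickening_iff.1 hx'
      exact ha (hball (by rwa [Metric.mem_ball, dist_comm]))
    have hm : μ0 G = ⨆ k, μ0 (Metric.cthickening (u k) Gᶜ)ᶜ := by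
      rw [← hmono.measure_iUnion, hU]
    rw [hm]
    refine iSup_le fun k => ?_
    refine (hlower _ Metric.isClosed_cthickening.isOpen_compl
      ⟨ε, hε, fun a ha => hd a (hsub k ha)⟩).trans ?_
    refine liminf_le_liminf ?_
    filter_upwards [hy (Metric.ball_mem_nhds 0 (hu0 k))] with n hn
    refine measure_mono fun x hx => ⟨x + y n, ?_, by simp⟩
    by_contra hc
    refine hx (Metric.mem_cthickening_of_dist_le _ (x + y n) _ _ hc ?_)
    have : ‖y n‖ < u k := by simpa using hn
    simpa [dist_eq_norm] using this.le

end
end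

section
/- Let Z be a real random variable regularly varying with index −α (α>0), let (λ_n) be a positive sequence regularly varying with index ρ > 0 with λ_n → ∞, and assume αρ > 1. Fix j ≥ 1. Then for every ε₀ with 0 < ε₀ < (αρ − 1)/((j+1)·α·ρ): lim_{n→∞} [ n·P(|Z| > λ_n) ]^{−j} · C(n, j+1) · P( |Z| > λ_n^{1−ε₀} )^{j+1} = 0, where C(n, j+1) denotes the binomial coefficient n choose j+1. -/
open MeasureTheory Filter Set

noncomputable section

/-- `Z` is regularly varying with index `-α`: the tail of `|Z|` is positive everywhere and
`P(|Z| > t x) / P(|Z| > t) → x^{-α}` as `t → ∞`, for every `x > 0`. -/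
def RegVarRV {Ω : Type*} [MeasurableSpace Ω] (μ : Measure Ω) (Z : Ω → ℝ) (α : ℝ) : Prop :=
  (∀ t : ℝ, 0 < t → 0 < (μ {ω | t < |Z ω|}).toReal) ∧
  ∀ x : ℝ, 0 < x →
    Tendsto (fun t : ℝ => (μ {ω | t * x < |Z ω|}).toReal / (μ {ω | t < |Z ω|}).toReal)
      atTop (nhds (x ^ (-α)))

/-- A sequence of positive reals is regularly varying with index `ρ`. -/
def RegVarSeq (l : ℕ → ℝ) (ρ : ℝ) : Prop :=
  ∀ c : ℝ, 0 < c → Tendsto (fun n : ℕ => l ⌊c * (n : ℝ)⌋₊ / l n) atTop (nhds (c ^ ρ))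

lemma dbl_bound (h : ℝ → ℝ) (T M : ℝ) (hT : 0 < T) (h2 : ∀ t, T ≤ t → h (2 * t) ≤ h t)
    (hM : ∀ t, T ≤ t → t ≤ 2 * T → h t ≤ M) : ∀ t, T ≤ t → h t ≤ M := by
  have key : ∀ k : ℕ, ∀ t, T ≤ t → t ≤ 2 ^ (k + 1) * T → h t ≤ M := by
    intro k
    induction k with
    | zero => intro t h1 h3; exact hM t h1 (by simpa using h3)
    | succ k ih =>
      intro t h1 h3
      by_cases hc : t ≤ 2 * T
      · exact hM t h1 hc
      · push Not at hc
        have h4 := h2 (t / 2) (by linarith)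
        have h5 := ih (t / 2) (by linarith) (by rw [pow_succ] at h3; linarith)
        rw [show 2 * (t / 2) = t by ring] at h4
        linarith
  intro t ht
  obtain ⟨k, hk⟩ := pow_unbounded_of_one_lt (t / T) (one_lt_two : (1 : ℝ) < 2)
  apply key k t ht
  rw [div_lt_iff₀ hT] at hk
  have : (2 : ℝ) ^ k * T ≤ 2 ^ (k + 1) * T := by
    gcongr
    · norm_num
    · omega
  linarith

lemma tail_upper (F : ℝ → ℝ) (α s : ℝ) (hF : Antitone F) (hp : ∀ t, 0 < t → 0 < F t)
    (hr : Tendsto (fun t => F (t * 2) / F t) atTop (nhds ((2 : ℝ) ^ (-α)))) (hs : s < α)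
    (hs0 : 0 < s) :
    ∃ C : ℝ, 0 < C ∧ ∀ᶠ t in atTop, F t ≤ C * t ^ (-s) := by
  have hlt : (2 : ℝ) ^ (-α) < 2 ^ (-s) :=
    Real.rpow_lt_rpow_of_exponent_lt one_lt_two (by linarith)
  obtain ⟨T, hT⟩ := eventually_atTop.1 ((hr.eventually_lt_const hlt).and (eventually_ge_atTop 1))
  have hT1 : 1 ≤ T := (hT T le_rfl).2
  have hT0 : 0 < T := by linarith
  refine ⟨F T * (2 * T) ^ s, mul_pos (hp T hT0) (Real.rpow_pos_of_pos (by linarith) _), ?_⟩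
  have := dbl_bound (fun t => F t * t ^ s) T (F T * (2 * T) ^ s) hT0 ?_ ?_
  · filter_upwards [eventually_ge_atTop T] with t ht
    have h0 : 0 < t := by linarith
    have h1 := this t ht
    rw [Real.rpow_neg h0.le, ← div_eq_mul_inv, le_div_iff₀ (Real.rpow_pos_of_pos h0 _)]
    exact h1
  · intro t ht
    have h0 : 0 < t := by linarith
    have h1 := (hT t ht).1
    rw [div_lt_iff₀ (hp t h0), Real.rpow_neg zero_le_two] at h1
    have h2 : (0 : ℝ) < 2 ^ s := Real.rpow_pos_of_pos two_pos _
    have h3 : 0 < t ^ s := Real.rpow_pos_of_pos h0 _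
    rw [Real.mul_rpow zero_le_two h0.le, mul_comm 2 t]
    calc F (t * 2) * (2 ^ s * t ^ s) ≤ ((2 ^ s)⁻¹ * F t) * (2 ^ s * t ^ s) := by gcongr
      _ = F t * t ^ s := by field_simp
  · intro t ht ht2
    have h0 : 0 < t := by linarith
    have := (hp T hT0).le
    have := hF ht
    gcongr

lemma tail_lower (F : ℝ → ℝ) (α s : ℝ) (hF : Antitone F) (hp : ∀ t, 0 < t → 0 < F t)
    (hr : Tendsto (fun t => F (t * 2) / F t) atTop (nhds ((2 : ℝ) ^ (-α)))) (hs : α < s)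
    (hs0 : 0 < s) :
    ∃ C : ℝ, 0 < C ∧ ∀ᶠ t in atTop, C * t ^ (-s) ≤ F t := by
  have hlt : (2 : ℝ) ^ (-s) < 2 ^ (-α) :=
    Real.rpow_lt_rpow_of_exponent_lt one_lt_two (by linarith)
  obtain ⟨T, hT⟩ := eventually_atTop.1 ((hr.eventually_const_lt hlt).and (eventually_ge_atTop 1))
  have hT1 : 1 ≤ T := (hT T le_rfl).2
  have hT0 : 0 < T := by linarith
  refine ⟨F (2 * T) * T ^ s, mul_pos (hp _ (by linarith)) (Real.rpow_pos_of_pos hT0 _), ?_⟩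
  have := dbl_bound (fun t => -(F t * t ^ s)) T (-(F (2 * T) * T ^ s)) hT0 ?_ ?_
  · filter_upwards [eventually_ge_atTop T] with t ht
    have h0 : 0 < t := by linarith
    have h1 := this t ht
    rw [Real.rpow_neg h0.le, ← div_eq_mul_inv, div_le_iff₀ (Real.rpow_pos_of_pos h0 _)]
    linarith
  · intro t ht
    have h0 : 0 < t := by linarith
    have h1 := (hT t ht).1
    rw [lt_div_iff₀ (hp t h0), Real.rpow_neg zero_le_two] at h1
    have h2 : (0 : ℝ) < 2 ^ s := Real.rpow_pos_of_pos two_pos _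
    have h3 : 0 < t ^ s := Real.rpow_pos_of_pos h0 _
    rw [Real.mul_rpow zero_le_two h0.le, mul_comm 2 t, neg_le_neg_iff]
    calc F t * t ^ s = ((2 ^ s)⁻¹ * F t) * (2 ^ s * t ^ s) := by field_simp
      _ ≤ F (t * 2) * (2 ^ s * t ^ s) := by gcongr
  · intro t ht ht2
    have h0 : 0 < t := by linarith
    have := (hp t h0).le
    have := hF ht2
    rw [neg_le_neg_iff]
    gcongr

lemma seq_lower (l : ℕ → ℝ) (hl : ∀ n, 0 < l n) (ρ r : ℝ) (hreg : RegVarSeq l ρ) (hr : r < ρ)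
    (hr0 : 0 < r) : ∃ C : ℝ, 0 < C ∧ ∀ n : ℕ, C * ((n : ℝ) + 1) ^ r ≤ l n := by
  have h := hreg (1 / 2) (by norm_num)
  have hlt : (1 / 2 : ℝ) ^ ρ < (1 / 2) ^ r :=
    Real.rpow_lt_rpow_of_exponent_gt (by norm_num) (by norm_num) hr
  obtain ⟨N, hN⟩ := eventually_atTop.1 (h.eventually_lt_const hlt)
  have hfin : ∃ C : ℝ, 0 < C ∧ ∀ n < N + 1, C * ((n : ℝ) + 1) ^ r ≤ l n := by
    generalize N + 1 = K
    induction K with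
    | zero => exact ⟨1, one_pos, by simp⟩
    | succ K ih =>
      obtain ⟨C, hC, h⟩ := ih
      have hK : (0 : ℝ) < ((K : ℝ) + 1) ^ r := by positivity
      refine ⟨min C (l K / ((K : ℝ) + 1) ^ r), lt_min hC (div_pos (hl K) hK), ?_⟩
      intro n hn
      rcases Nat.lt_succ_iff_lt_or_eq.1 hn with h1 | rfl
      · refine le_trans ?_ (h n h1)
        gcongr
        exact min_le_left _ _
      · rw [← le_div_iff₀ hK]
        exact min_le_right _ _
  obtain ⟨C, hC, hb⟩ := hfin
  refine ⟨C, hC, fun n => ?_⟩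
  induction n using Nat.strong_induction_on with
  | _ n ih =>
    by_cases hn : n < N + 1
    · exact hb n hn
    have hfl : ⌊(1 / 2 : ℝ) * n⌋₊ = n / 2 := by
      rw [show (1 / 2 : ℝ) * n = (n : ℝ) / (2 : ℕ) by push_cast; ring]
      exact Nat.floor_div_eq_div n 2
    have h1 := hN n (by omega)
    rw [hfl, div_lt_iff₀ (hl n)] at h1
    have h2 := ih (n / 2) (by omega)
    have h3 : (1 / 2 : ℝ) * (n + 1) ≤ ((n / 2 : ℕ) : ℝ) + 1 := by
      have : n + 1 ≤ 2 * (n / 2 + 1) := by omega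
      have : (n : ℝ) + 1 ≤ 2 * (((n / 2 : ℕ) : ℝ) + 1) := by exact_mod_cast this
      linarith
    have h4 : (1 / 2 : ℝ) ^ r * ((n : ℝ) + 1) ^ r ≤ (((n / 2 : ℕ) : ℝ) + 1) ^ r := by
      rw [← Real.mul_rpow (by norm_num) (by positivity)]
      gcongr
    have h5 : (0 : ℝ) < (1 / 2) ^ r := by positivity
    have h6 : C * ((1 / 2 : ℝ) ^ r * ((n : ℝ) + 1) ^ r) ≤ C * (((n / 2 : ℕ) : ℝ) + 1) ^ r := by
      gcongr
    have h7 : (1 / 2 : ℝ) ^ r * (C * ((n : ℝ) + 1) ^ r) ≤ (1 / 2) ^ r * l n := by linarith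
    exact le_of_mul_le_mul_left h7 h5

lemma exists_delta (α ρ ε : ℝ) (j : ℕ) (hα : 0 < α) (hρ : 0 < ρ)
    (hε : ε < (α * ρ - 1) / ((j + 1) * α * ρ)) :
    ∃ δ : ℝ, 0 < δ ∧ δ < α ∧ δ < ρ ∧
      1 < (ρ - δ) * ((1 - ε) * (α - δ) * (j + 1) - (α + δ) * j) := by
  have hc : Continuous fun δ : ℝ => (ρ - δ) * ((1 - ε) * (α - δ) * (j + 1) - (α + δ) * j) := by
    fun_prop
  have h0 : 1 < (ρ - 0) * ((1 - ε) * (α - 0) * (j + 1) - (α + 0) * j) := by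
    rw [lt_div_iff₀ (by positivity)] at hε
    linarith
  have h1 := (hc.tendsto 0).eventually_const_lt h0
  have h2 := ((h1.and (eventually_lt_nhds hα)).and (eventually_lt_nhds hρ)).filter_mono
    (nhdsWithin_le_nhds (s := Ioi 0))
  obtain ⟨δ, ⟨⟨a, b⟩, c⟩, d⟩ := (h2.and self_mem_nhdsWithin).exists
  exact ⟨δ, d, b, c, a⟩

theorem more_than_j_jumps_negligible {Ω : Type*} [MeasurableSpace Ω]
    (μ : Measure Ω) [IsProbabilityMeasure μ]
    (Z : Ω → ℝ) (hmeas : Measurable Z)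
    (α : ℝ) (hα : 0 < α) (hrv : RegVarRV μ Z α)
    (l : ℕ → ℝ) (hlpos : ∀ n, 0 < l n)
    (ρ : ℝ) (hρ : 0 < ρ) (hreg : RegVarSeq l ρ) (hlim : Tendsto l atTop atTop)
    (hαρ : 1 < α * ρ)
    (j : ℕ) (hj : 1 ≤ j)
    (ε₀ : ℝ) (hε₀ : 0 < ε₀) (hε₀' : ε₀ < (α * ρ - 1) / ((j + 1) * α * ρ)) :
    Tendsto
      (fun n : ℕ =>
        (((n : ℝ) * (μ {ω | l n < |Z ω|}).toReal) ^ j)⁻¹ * (n.choose (j + 1) : ℝ) *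
          ((μ {ω | (l n) ^ ((1 : ℝ) - ε₀) < |Z ω|}).toReal) ^ (j + 1))
      atTop (nhds 0) := by
  obtain ⟨hp, hr⟩ := hrv
  have hr2 := hr 2 two_pos
  set F : ℝ → ℝ := fun t => (μ {ω | t < |Z ω|}).toReal with hFdef
  have hF : Antitone F := by
    intro a b hab
    apply ENNReal.toReal_mono (measure_ne_top _ _)
    apply measure_mono
    intro ω hω
    exact lt_of_le_of_lt hab hω
  change ∀ t, 0 < t → 0 < F t at hp
  change Tendsto (fun t => F (t * 2) / F t) atTop _ at hr2
  change Tendsto (fun n : ℕ => (((n : ℝ) * F (l n)) ^ j)⁻¹ * (n.choose (j + 1) : ℝ) *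
    (F ((l n) ^ ((1 : ℝ) - ε₀))) ^ (j + 1)) atTop (nhds 0)
  obtain ⟨δ, hδ, hδα, hδρ, hexp⟩ := exists_delta α ρ ε₀ j hα hρ hε₀'
  have hε1 : 0 < 1 - ε₀ := by
    rw [lt_div_iff₀ (by positivity)] at hε₀'
    have h1 : ε₀ * (α * ρ) < 1 * (α * ρ) := by
      have : 0 ≤ ε₀ * (j * (α * ρ)) := by positivity
      nlinarith
    have := lt_of_mul_lt_mul_right h1 (by positivity)
    linarith
  obtain ⟨C₁, hC₁, hup⟩ := tail_upper F α (α - δ) hF hp hr2 (by linarith) (by linarith)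
  obtain ⟨C₂, hC₂, hlo⟩ := tail_lower F α (α + δ) hF hp hr2 (by linarith) (by linarith)
  obtain ⟨C₃, hC₃, hsq⟩ := seq_lower l hlpos ρ (ρ - δ) hreg (by linarith) (by linarith)
  set p : ℝ := (1 - ε₀) * (α - δ) * (j + 1) - (α + δ) * j with hpdef
  have hp0 : 0 < p := by
    by_contra hc
    push Not at hc
    have := mul_nonpos_of_nonneg_of_nonpos (by linarith : 0 ≤ ρ - δ) hc
    linarith
  have hup' := ((tendsto_rpow_atTop hε1).comp hlim).eventually hup
  have hlo' := hlim.eventually hlo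
  have hlim0 : Tendsto (fun n : ℕ => (C₂ ^ j)⁻¹ * C₁ ^ (j + 1) * C₃ ^ (-p) *
      (n : ℝ) ^ (-((ρ - δ) * p - 1))) atTop (nhds 0) := by
    have := ((tendsto_rpow_neg_atTop (by linarith : 0 < (ρ - δ) * p - 1)).comp
      tendsto_natCast_atTop_atTop).const_mul ((C₂ ^ j)⁻¹ * C₁ ^ (j + 1) * C₃ ^ (-p))
    simpa using this
  refine squeeze_zero' (Eventually.of_forall fun n => ?_) ?_ hlim0
  · have := (hp _ (hlpos n)).le
    have := (hp _ (Real.rpow_pos_of_pos (hlpos n) (1 - ε₀))).le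
    positivity
  filter_upwards [hup', hlo', eventually_ge_atTop 1] with n h1 h2 hn
  simp only [Function.comp] at h1
  have hL := hlpos n
  have hn0 : (0 : ℝ) < n := by exact_mod_cast hn
  have hA := hp _ hL
  have hB := hp _ (Real.rpow_pos_of_pos hL (1 - ε₀))
  have hch : (n.choose (j + 1) : ℝ) ≤ (n : ℝ) ^ (j + 1) := by
    exact_mod_cast Nat.choose_le_pow n (j + 1)
  have hlp : (0 : ℝ) < l n ^ (-(α + δ)) := Real.rpow_pos_of_pos hL _
  have h3 : l n ^ (-p) ≤ (C₃ * (n : ℝ) ^ (ρ - δ)) ^ (-p) := by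
    apply Real.rpow_le_rpow_of_nonpos (by positivity) _ (by linarith)
    refine le_trans ?_ (hsq n)
    have : (0 : ℝ) ≤ ρ - δ := by linarith
    gcongr
    linarith
  have e1 : ((l n ^ (-(α + δ))) ^ j)⁻¹ = l n ^ ((α + δ) * j) := by
    rw [← Real.rpow_natCast, ← Real.rpow_mul hL.le, ← Real.rpow_neg hL.le]
    congr 1; ring
  have e2 : ((l n ^ (1 - ε₀)) ^ (-(α - δ))) ^ (j + 1) = l n ^ (-((1 - ε₀) * (α - δ) * (j + 1))) := by
    rw [← Real.rpow_natCast, ← Real.rpow_mul hL.le, ← Real.rpow_mul hL.le]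
    congr 1; push_cast; ring
  have e3 : l n ^ ((α + δ) * j) * l n ^ (-((1 - ε₀) * (α - δ) * (j + 1))) = l n ^ (-p) := by
    rw [← Real.rpow_add hL, hpdef]
    congr 1; ring
  have e4 : (n : ℝ) * (C₃ * (n : ℝ) ^ (ρ - δ)) ^ (-p) =
      C₃ ^ (-p) * (n : ℝ) ^ (-((ρ - δ) * p - 1)) := by
    rw [Real.mul_rpow hC₃.le (by positivity), ← Real.rpow_mul hn0.le,
      show -((ρ - δ) * p - 1) = 1 + (ρ - δ) * (-p) by ring, Real.rpow_add hn0, Real.rpow_one]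
    ring
  calc (((n : ℝ) * F (l n)) ^ j)⁻¹ * (n.choose (j + 1) : ℝ) * (F ((l n) ^ ((1 : ℝ) - ε₀))) ^ (j + 1)
      ≤ (((n : ℝ) * (C₂ * l n ^ (-(α + δ)))) ^ j)⁻¹ * (n : ℝ) ^ (j + 1) *
        (C₁ * (l n ^ (1 - ε₀)) ^ (-(α - δ))) ^ (j + 1) := by gcongr
    _ = (C₂ ^ j)⁻¹ * C₁ ^ (j + 1) * n * (((l n ^ (-(α + δ))) ^ j)⁻¹ *
        ((l n ^ (1 - ε₀)) ^ (-(α - δ))) ^ (j + 1)) := by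
        rw [mul_pow, mul_pow, mul_pow, pow_succ (n : ℝ) j]
        field_simp
    _ = (C₂ ^ j)⁻¹ * C₁ ^ (j + 1) * n * l n ^ (-p) := by rw [e1, e2, e3]
    _ ≤ (C₂ ^ j)⁻¹ * C₁ ^ (j + 1) * n * (C₃ * (n : ℝ) ^ (ρ - δ)) ^ (-p) := by gcongr
    _ = _ := by rw [mul_assoc _ (n : ℝ), e4]; ring

end
end

section
/- Let Z be a real random variable regularly varying with index −α (α>0), and let (λ_n) be a positive sequence, regularly varying with index ρ > 0 and λ_n → ∞, such that either Var(Z) < ∞ and ρ > 1/2, or Var(Z) = ∞ and αρ > 1. Then there exists ε̄ > 0 such that for every ε₀ ∈ (0, ε̄): lim_{n→∞} n · Var( Z·1{|Z| ≤ λ_n^{1−ε₀}} ) / λ_n^{2−ε₀} = 0. -/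
open MeasureTheory ProbabilityTheory Filter Set

noncomputable section

theorem aux_seq (l : ℕ → ℝ) (hlpos : ∀ n, 0 < l n) (ρ r : ℝ) (hr : 0 < r) (hrρ : r < ρ)
    (hreg : RegVarSeq l ρ) : ∃ c : ℝ, 0 < c ∧ ∀ n : ℕ, c * ((n : ℝ) + 1) ^ r ≤ l n := by
  have h := hreg (1/2) (by norm_num)
  have hlt : ((1:ℝ)/2) ^ ρ < (1/2) ^ r :=
    Real.rpow_lt_rpow_of_exponent_gt (by norm_num) (by norm_num) hrρ
  obtain ⟨N, hN⟩ := eventually_atTop.1 (h.eventually (gt_mem_nhds hlt))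
  obtain ⟨m, -, hm⟩ := Finset.exists_min_image (Finset.range (N + 1))
    (fun n => l n / ((n : ℝ) + 1) ^ r) ⟨0, by simp⟩
  have hp : ∀ n : ℕ, 0 < ((n : ℝ) + 1) ^ r := fun n => by positivity
  refine ⟨l m / ((m : ℝ) + 1) ^ r, div_pos (hlpos m) (hp m), fun n => ?_⟩
  induction n using Nat.strong_induction_on with
  | _ n ih =>
  by_cases hn : n < N + 1
  · have := hm n (Finset.mem_range.2 hn)
    rwa [le_div_iff₀ (hp n)] at this
  · have hf : ⌊(1/2 : ℝ) * (n : ℝ)⌋₊ = n / 2 := by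
      rw [show (1/2 : ℝ) * (n : ℝ) = (n : ℝ) / (2 : ℕ) by push_cast; ring, Nat.floor_div_natCast]
      simp
    have h1 := hN n (by omega)
    rw [hf, div_lt_iff₀ (hlpos n)] at h1
    have h2 := ih (n / 2) (by omega)
    have hc : 0 < l m / ((m : ℝ) + 1) ^ r := div_pos (hlpos m) (hp m)
    have h3 : ((1:ℝ)/2) ^ r * ((n : ℝ) + 1) ^ r ≤ (((n / 2 : ℕ) : ℝ) + 1) ^ r := by
      rw [← Real.mul_rpow (by norm_num) (by positivity)]
      apply Real.rpow_le_rpow (by positivity) _ hr.le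
      have : n + 1 ≤ 2 * (n / 2) + 2 := by omega
      have : (n : ℝ) + 1 ≤ 2 * ((n / 2 : ℕ) : ℝ) + 2 := by exact_mod_cast this
      linarith
    have h4 := mul_le_mul_of_nonneg_left h3 hc.le
    have h5 : (0:ℝ) < (1/2) ^ r := by positivity
    refine le_of_mul_le_mul_left ?_ h5
    nlinarith

theorem aux_moment {Ω : Type*} [MeasurableSpace Ω]
    (μ : Measure Ω) [IsProbabilityMeasure μ]
    (Z : Ω → ℝ) (hmeas : Measurable Z)
    (α : ℝ) (hrv : RegVarRV μ Z α) (p : ℝ) (hp : 0 < p) (hpα : p < α) :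
    Integrable (fun ω => |Z ω| ^ p) μ := by
  obtain ⟨q, hpq, hqα⟩ := exists_between hpα
  have h := hrv.2 2 (by norm_num)
  have hlt : (2:ℝ) ^ (-α) < 2 ^ (-q) :=
    Real.rpow_lt_rpow_of_exponent_lt (by norm_num) (by linarith)
  obtain ⟨t0, ht0⟩ := eventually_atTop.1 (h.eventually (gt_mem_nhds hlt))
  set t : ℝ := max t0 1 with ht
  have htpos : 0 < t := lt_of_lt_of_le one_pos (le_max_right _ _)
  have hG : ∀ k : ℕ, (μ {ω | t * 2 ^ k < |Z ω|}).toReal ≤ ((2:ℝ) ^ (-q)) ^ k := by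
    intro k
    induction k with
    | zero => simpa using (ENNReal.toReal_mono ENNReal.one_ne_top prob_le_one)
    | succ k ih =>
      have h1 : t ≤ t * 2 ^ k := le_mul_of_one_le_right htpos.le (one_le_pow₀ (by norm_num))
      have h2 := ht0 (t * 2 ^ k) ((le_max_left _ _).trans h1)
      rw [div_lt_iff₀ (hrv.1 _ (by positivity))] at h2
      rw [pow_succ, ← mul_assoc, pow_succ]
      have h5 : (0:ℝ) < 2 ^ (-q) := by positivity
      nlinarith
  have hms : ∀ k : ℕ, MeasurableSet {ω | t * 2 ^ k < |Z ω|} := fun k =>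
    measurableSet_lt measurable_const hmeas.abs
  have hpt : ∀ ω, ENNReal.ofReal (|Z ω| ^ p) ≤ ENNReal.ofReal (t ^ p) +
      ∑' k : ℕ, ({ω | t * 2 ^ k < |Z ω|}).indicator
        (fun _ => ENNReal.ofReal ((t * 2 ^ (k + 1)) ^ p)) ω := by
    intro ω
    by_cases hz : |Z ω| ≤ t
    · exact le_add_right (ENNReal.ofReal_le_ofReal (Real.rpow_le_rpow (abs_nonneg _) hz hp.le))
    · push Not at hz
      have hex : ∃ k : ℕ, |Z ω| ≤ t * 2 ^ k := by
        obtain ⟨k, hk⟩ := pow_unbounded_of_one_lt (|Z ω| / t) (one_lt_two)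
        rw [div_lt_iff₀ htpos] at hk
        exact ⟨k, by linarith⟩
      classical
      have hs := Nat.find_spec hex
      have hmin := fun m => @Nat.find_min _ _ hex m
      rcases hk : Nat.find hex with _ | k
      · rw [hk] at hs
        simp at hs
        linarith
      · rw [hk] at hs hmin
        have h1 : t * 2 ^ k < |Z ω| := not_le.1 (hmin k (Nat.lt_succ_self k))
        refine le_add_left (le_trans ?_ (ENNReal.le_tsum k))
        rw [Set.indicator_of_mem (by exact h1)]
        exact ENNReal.ofReal_le_ofReal (Real.rpow_le_rpow (abs_nonneg _) hs hp.le)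
  have hm : Measurable (fun ω => |Z ω| ^ p) := by fun_prop
  refine ⟨hm.aestronglyMeasurable, ?_⟩
  rw [hasFiniteIntegral_iff_ofReal (ae_of_all _ fun ω => by positivity)]
  refine lt_of_le_of_lt (lintegral_mono hpt) ?_
  rw [lintegral_add_left measurable_const, lintegral_tsum
    (fun k => (measurable_const.indicator (hms k)).aemeasurable)]
  simp only [lintegral_indicator (hms _), lintegral_const, Measure.restrict_apply_univ,
    measure_univ, mul_one]
  refine ENNReal.add_lt_top.2 ⟨ENNReal.ofReal_lt_top, ?_⟩
  have hb : ∀ k : ℕ, ENNReal.ofReal ((t * 2 ^ (k + 1)) ^ p) * μ {ω | t * 2 ^ k < |Z ω|} ≤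
      ENNReal.ofReal ((t * 2) ^ p * ((2:ℝ) ^ (p - q)) ^ k) := by
    intro k
    rw [← ENNReal.ofReal_toReal (measure_ne_top μ {ω | t * 2 ^ k < |Z ω|}),
      ← ENNReal.ofReal_mul (by positivity)]
    apply ENNReal.ofReal_le_ofReal
    refine (mul_le_mul_of_nonneg_left (hG k) (by positivity)).trans (le_of_eq ?_)
    rw [show t * 2 ^ (k+1) = (t * 2) * 2 ^ k by ring, Real.mul_rpow (by positivity) (by positivity),
      sub_eq_add_neg, Real.rpow_add (by norm_num), mul_pow, Real.rpow_pow_comm (x := 2) (by norm_num) p k]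
    ring
  refine lt_of_le_of_lt (ENNReal.tsum_le_tsum hb) ?_
  have hsum : Summable (fun k : ℕ => (t * 2) ^ p * ((2:ℝ) ^ (p - q)) ^ k) :=
    (summable_geometric_of_lt_one (by positivity)
      (Real.rpow_lt_one_of_one_lt_of_neg (by norm_num) (by linarith))).mul_left _
  rw [← ENNReal.ofReal_tsum_of_nonneg (fun k => by positivity) hsum]
  exact ENNReal.ofReal_lt_top

theorem aux_var {Ω : Type*} [MeasurableSpace Ω]
    (μ : Measure Ω) [IsProbabilityMeasure μ]
    (Z : Ω → ℝ) (hmeas : Measurable Z) (p : ℝ) (hp2 : p ≤ 2)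
    (hint : Integrable (fun ω => |Z ω| ^ p) μ) (T : ℝ) (hT : 0 ≤ T) :
    variance (fun ω => if |Z ω| ≤ T then Z ω else 0) μ ≤ T ^ (2 - p) * ∫ ω, |Z ω| ^ p ∂μ := by
  have hm : Measurable (fun ω => if |Z ω| ≤ T then Z ω else 0) :=
    Measurable.ite (measurableSet_le hmeas.abs measurable_const) hmeas measurable_const
  refine (variance_le_expectation_sq hm.aestronglyMeasurable).trans ?_
  rw [← integral_const_mul]
  refine integral_mono_of_nonneg (ae_of_all _ fun ω => by simp; positivity)
    (hint.const_mul _) (ae_of_all _ fun ω => ?_)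
  simp only [Pi.pow_apply]
  split_ifs with h
  · have : Z ω ^ 2 = |Z ω| ^ (2 - p) * |Z ω| ^ p := by
      rw [← Real.rpow_add' (abs_nonneg _) (by norm_num)]
      norm_num
    rw [this]
    exact mul_le_mul_of_nonneg_right
      (Real.rpow_le_rpow (abs_nonneg _) h (by linarith)) (by positivity)
  · simp only [ne_eq, OfNat.ofNat_ne_zero, not_false_eq_true, zero_pow]
    positivity

/-- **The truncated variance is negligible.** For a regularly varying `Z` and a regularly
varying scaling sequence `λ_n` (with `ρ > 1/2` if the variance is finite, `αρ > 1` if it is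
infinite), there exists `ε̄ > 0` such that for every `ε₀ ∈ (0, ε̄)`,
`n · Var(Z 1{|Z| ≤ λ_n^{1-ε₀}}) / λ_n^{2-ε₀} → 0`. -/
theorem truncated_variance_negligible {Ω : Type*} [MeasurableSpace Ω]
    (μ : Measure Ω) [IsProbabilityMeasure μ]
    (Z : Ω → ℝ) (hmeas : Measurable Z)
    (α : ℝ) (hα : 0 < α) (hrv : RegVarRV μ Z α)
    (l : ℕ → ℝ) (hlpos : ∀ n, 0 < l n)
    (ρ : ℝ) (hρ : 0 < ρ) (hreg : RegVarSeq l ρ) (hlim : Tendsto l atTop atTop)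
    (hcase : (evariance Z μ ≠ ⊤ ∧ 1 / 2 < ρ) ∨ (evariance Z μ = ⊤ ∧ 1 < α * ρ)) :
    ∃ εbar : ℝ, 0 < εbar ∧ ∀ ε₀ ∈ Ioo (0:ℝ) εbar,
      Tendsto
        (fun n : ℕ =>
          (n : ℝ) *
            variance (fun ω => if |Z ω| ≤ (l n) ^ ((1 : ℝ) - ε₀) then Z ω else 0) μ /
              (l n) ^ ((2 : ℝ) - ε₀))
        atTop (nhds 0) := by
  have key : ∃ p : ℝ, 0 < p ∧ p ≤ 2 ∧ 1 < p * ρ ∧ Integrable (fun ω => |Z ω| ^ p) μ := by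
    rcases hcase with ⟨hv, h⟩ | ⟨hv, h⟩
    · refine ⟨2, by norm_num, le_rfl, by linarith, ?_⟩
      have h2 : MemLp Z 2 μ := (evariance_lt_top_iff_memLp hmeas.aestronglyMeasurable).1
        (lt_top_iff_ne_top.2 hv)
      simpa using h2.integrable_sq
    · have hα2 : α ≤ 2 := by
        by_contra hc
        push Not at hc
        have hi := aux_moment μ Z hmeas α hrv 2 (by norm_num) hc
        have h2 : MemLp Z 2 μ := (memLp_two_iff_integrable_sq hmeas.aestronglyMeasurable).2
          (by simpa using hi)
        exact ((evariance_lt_top_iff_memLp hmeas.aestronglyMeasurable).2 h2).ne hv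
      have h1 : 1 / ρ < α := by rwa [div_lt_iff₀ hρ]
      obtain ⟨p, hp1, hp2⟩ := exists_between h1
      have hp0 : 0 < p := lt_trans (by positivity) hp1
      exact ⟨p, hp0, by linarith, by rwa [div_lt_iff₀ hρ] at hp1,
        aux_moment μ Z hmeas α hrv p hp0 hp2⟩
  obtain ⟨p, hp0, hp2, hpρ, hint⟩ := key
  have h1 : 1 / p < ρ := by rw [div_lt_iff₀ hp0]; linarith
  obtain ⟨r, hr1, hr2⟩ := exists_between h1
  have hr0 : 0 < r := lt_trans (by positivity) hr1
  have hrp : 1 / r < p := by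
    rw [div_lt_iff₀ hp0] at hr1
    rw [div_lt_iff₀ hr0]; linarith
  obtain ⟨c, hc, hl⟩ := aux_seq l hlpos ρ r hr0 hr2 hreg
  refine ⟨p - 1 / r, by linarith, fun ε hε => ?_⟩
  obtain ⟨hε0, hε1⟩ := hε
  set q : ℝ := p + ε * (1 - p) with hq
  have hq1 : 1 / r < q := by nlinarith
  have hq0 : 0 < q := lt_trans (by positivity) hq1
  have hrq : 1 < r * q := by rw [div_lt_iff₀ hr0] at hq1; linarith
  set C : ℝ := ∫ ω, |Z ω| ^ p ∂μ with hC
  have hC0 : 0 ≤ C := integral_nonneg fun ω => by positivity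
  have hlim0 : Tendsto (fun n : ℕ => C / c ^ q * ((n : ℝ) + 1) ^ (-(r * q - 1))) atTop (nhds 0) := by
    have := (tendsto_rpow_neg_atTop (y := r * q - 1) (by linarith)).comp
      (tendsto_atTop_add_const_right atTop (1:ℝ) tendsto_natCast_atTop_atTop)
    simpa using this.const_mul (C / c ^ q)
  refine squeeze_zero (fun n => ?_) (fun n => ?_) hlim0
  · have := hlpos n
    exact div_nonneg (mul_nonneg (by positivity) (variance_nonneg _ _)) (by positivity)
  · have hln := hlpos n
    have hv := aux_var μ Z hmeas p hp2 hint ((l n) ^ (1 - ε)) (by positivity)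
    have hn1 : (0:ℝ) < (n:ℝ) + 1 := by positivity
    calc _ ≤ ((n:ℝ) + 1) * (((l n) ^ (1 - ε)) ^ (2 - p) * C) / (l n) ^ (2 - ε) := by
          gcongr
          · exact variance_nonneg _ _
          · linarith
      _ = ((n:ℝ) + 1) * C * (l n) ^ (-q) := by
          rw [← Real.rpow_mul hln.le, show -q = (1 - ε) * (2 - p) - (2 - ε) by rw [hq]; ring,
            Real.rpow_sub hln ((1 - ε) * (2 - p)) (2 - ε)]
          ring
      _ ≤ ((n:ℝ) + 1) * C * (c * ((n : ℝ) + 1) ^ r) ^ (-q) := by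
          refine mul_le_mul_of_nonneg_left ?_ (by positivity)
          exact Real.rpow_le_rpow_of_nonpos (by positivity) (hl n) (by linarith)
      _ = _ := by
          rw [Real.mul_rpow hc.le (by positivity), ← Real.rpow_mul hn1.le, Real.rpow_neg hc.le,
            show -(r * q - 1) = 1 + r * (-q) by ring, Real.rpow_add hn1, Real.rpow_one]
          ring


end
end

section
/- Fix α > 0, K > 0, θ ∈ (0,1), reals c > m, and M > κ where κ = (1−θ)K/(c−m). Let ν_α be the Borel measure on (0,∞) with ν_α((x,∞)) = x^{−α} for x > 0 and let Leb be Lebesgue measure on [0,M]. Then for every l ∈ (0, κ): (ν_α × Leb)( { (z,u) ∈ (0,∞) × [0,M] : min(z,K) − θK > l·(c−m) and u < M − l } ) = (M − l)·( l·(c−m) + θK )^{−α}. This is the first-level large-deviation limit measure μ_L^{(1)}((l,∞)) of long intense periods above level θK for a buffer-K queue: the set describes the one-jump configurations (jump size z at time u, with drift −(c−m) and reflection at the buffer K) whose resulting path stays above θK for a period longer than l within [0,M]. -/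
open MeasureTheory Filter Set

noncomputable section

/-- **The first-level limit measure of long intense periods (continuous part).**
With `ν_α` the measure on `(0,∞)` with `ν_α((x,∞)) = x^{-α}` and `Leb` Lebesgue measure on
`[0,M]`, for `0 < l < κ = (1−θ)K/(c−m)` the one-jump configurations producing an intense
period above `θK` longer than `l` have measure `(M − l)·(l(c−m) + θK)^{-α}`. -/
theorem limit_measure_one_jump (α K θ c m M : ℝ)
    (hα : 0 < α) (hK : 0 < K) (hθ : θ ∈ Ioo (0:ℝ) 1) (hcm : m < c)
    (hM : (1 - θ) * K / (c - m) < M)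
    (ν : Measure ℝ) [SigmaFinite ν]
    (hν : ∀ x : ℝ, 0 < x → ν (Ioi x) = ENNReal.ofReal (x ^ (-α)))
    (hν0 : ν (Iic 0) = 0)
    (l : ℝ) (hl : 0 < l) (hlκ : l < (1 - θ) * K / (c - m)) :
    (ν.prod (volume.restrict (Icc (0:ℝ) M)))
        {zu : ℝ × ℝ | 0 < zu.1 ∧ zu.2 ∈ Icc (0:ℝ) M ∧
          l * (c - m) < min zu.1 K - θ * K ∧ zu.2 < M - l}
      = ENNReal.ofReal ((M - l) * (l * (c - m) + θ * K) ^ (-α)) := by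
  obtain ⟨hθ0, hθ1⟩ := hθ
  have hd : 0 < c - m := sub_pos.mpr hcm
  have h1 : l * (c - m) < (1 - θ) * K := (lt_div_iff₀ hd).mp hlκ
  have hld : 0 < l * (c - m) := mul_pos hl hd
  have hθK : 0 < θ * K := mul_pos hθ0 hK
  have hset : {zu : ℝ × ℝ | 0 < zu.1 ∧ zu.2 ∈ Icc (0:ℝ) M ∧
          l * (c - m) < min zu.1 K - θ * K ∧ zu.2 < M - l}
      = Ioi (l * (c - m) + θ * K) ×ˢ Ico (0:ℝ) (M - l) := by
    ext ⟨z, u⟩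
    simp only [mem_setOf_eq, mem_prod, mem_Ioi, mem_Ico, mem_Icc, lt_sub_iff_add_lt, lt_min_iff]
    constructor
    · rintro ⟨_, ⟨h0, _⟩, ⟨h2, _⟩, h3⟩
      exact ⟨h2, h0, h3⟩
    · rintro ⟨h2, h0, h3⟩
      exact ⟨by linarith, ⟨h0, by linarith⟩, ⟨h2, by linarith⟩, h3⟩
  have hsub : Ico (0:ℝ) (M - l) ⊆ Icc 0 M := fun u hu => ⟨hu.1, by linarith [hu.2]⟩
  rw [hset, Measure.prod_prod, hν _ (by linarith), Measure.restrict_apply measurableSet_Ico,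
    inter_eq_self_of_subset_left hsub, Real.volume_Ico, sub_zero, mul_comm,
    ENNReal.ofReal_mul (by linarith)]

end
end
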